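/- arXiv:0806.3522 — 2 statements merged into one kernel-verified Lean document; each statement's English description precedes it below -/
import Mathlib

section
/- For every a ∈ 𝔤, the divergence of the geodesic vector field X_E at a, i.e. the trace of the Fréchet derivative of X_E at the point a, equals Tr(ad_a), where ad_a(v) = [a,v]. -/
open scoped InnerProductSpace

/-!
The derivative of the geodesic field at `a` is `v ↦ -(D a v + D v a)`. Since `D` is torsion-free,
`D v a = D a v - [a, v]`, so this derivative is `ad a - 2 • D a`; since `D` is metric, `D a` is
skew-adjoint and hence traceless.
-/

section Calculus

variable {𝕜 E F : Type*} [NontriviallyNormedField 𝕜] [CompleteSpace 𝕜]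
  [NormedAddCommGroup E] [NormedSpace 𝕜 E] [FiniteDimensional 𝕜 E]
  [NormedAddCommGroup F] [NormedSpace 𝕜 F]

theorem hasFDerivAt_bilinear_diag (B : E →ₗ[𝕜] E →ₗ[𝕜] F) (a : E) :
    HasFDerivAt (fun x => B x x) (B a + B.flip a).toContinuousLinearMap a := by
  have h := B.toContinuousBilinearMap.hasFDerivAt_of_bilinear (hasFDerivAt_id a) (hasFDerivAt_id a)
  refine h.congr_fderiv ?_
  ext v
  simp

end Calculus

section Trace

variable {𝕜 E : Type*} [RCLike 𝕜] [NormedAddCommGroup E] [InnerProductSpace 𝕜 E]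
  [FiniteDimensional 𝕜 E]

theorem trace_eq_zero_of_inner_map_self_eq_zero {T : E →ₗ[𝕜] E} (hT : ∀ v, ⟪v, T v⟫_𝕜 = 0) :
    LinearMap.trace 𝕜 E T = 0 := by
  rw [T.trace_eq_sum_inner (stdOrthonormalBasis 𝕜 E)]
  exact Finset.sum_eq_zero fun i _ => hT _

end Trace

section LeviCivita

variable {G : Type*} [NormedAddCommGroup G] [InnerProductSpace ℝ G]

/-- `D` is the Levi-Civita product of the bracket `lie` with respect to the inner product of `G`,
encoded by the Koszul formula; `lie` may be any bilinear map. -/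
def IsLeviCivitaProduct (lie D : G →ₗ[ℝ] G →ₗ[ℝ] G) : Prop :=
  ∀ u v w : G, 2 * ⟪D u v, w⟫_ℝ = ⟪lie u v, w⟫_ℝ + ⟪lie w u, v⟫_ℝ + ⟪lie w v, u⟫_ℝ

namespace IsLeviCivitaProduct

variable {lie D : G →ₗ[ℝ] G →ₗ[ℝ] G}

theorem inner_left_eq_neg_inner_right (hD : IsLeviCivitaProduct lie D) (hlie : lie.IsAlt)
    (u v w : G) : ⟪D u v, w⟫_ℝ = -⟪v, D u w⟫_ℝ := by
  have hvw := hD u v w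
  have hwv := hD u w v
  rw [← hlie.neg u w, ← hlie.neg v w, inner_neg_left, inner_neg_left] at hvw
  rw [← hlie.neg u v, inner_neg_left] at hwv
  rw [real_inner_comm (D u w) v]
  linarith

theorem sub_eq_lie (hD : IsLeviCivitaProduct lie D) (hlie : lie.IsAlt) (u v : G) :
    D u v - D v u = lie u v := by
  refine ext_inner_right ℝ fun w => ?_
  have huv := hD u v w
  have hvu := hD v u w
  rw [← hlie.neg u v, inner_neg_left] at hvu
  rw [inner_sub_left]
  linarith

theorem flip_eq_sub (hD : IsLeviCivitaProduct lie D) (hlie : lie.IsAlt) (a : G) :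
    D.flip a = D a - lie a := by
  ext v
  rw [LinearMap.flip_apply, LinearMap.sub_apply, ← hD.sub_eq_lie hlie a v, sub_sub_cancel]

theorem trace_eq_zero [FiniteDimensional ℝ G] (hD : IsLeviCivitaProduct lie D)
    (hlie : lie.IsAlt) (a : G) : LinearMap.trace ℝ G (D a) = 0 := by
  refine trace_eq_zero_of_inner_map_self_eq_zero fun v => ?_
  have hskew := hD.inner_left_eq_neg_inner_right hlie a v v
  rwa [real_inner_comm, self_eq_neg] at hskew

end IsLeviCivitaProduct

theorem divergence_geodesic_field_general [FiniteDimensional ℝ G]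
    {lie D : G →ₗ[ℝ] G →ₗ[ℝ] G} (hlie : lie.IsAlt) (hD : IsLeviCivitaProduct lie D) (a : G) :
    LinearMap.trace ℝ G (fderiv ℝ (fun x : G => -(D x x)) a).toLinearMap =
      LinearMap.trace ℝ G (lie a) := by
  have hderiv : (fderiv ℝ (fun x : G => -(D x x)) a).toLinearMap = -(D a + D.flip a) :=
    congrArg ContinuousLinearMap.toLinearMap (hasFDerivAt_bilinear_diag D a).neg.fderiv
  calc
    LinearMap.trace ℝ G (fderiv ℝ (fun x : G => -(D x x)) a).toLinearMap
    _ = LinearMap.trace ℝ G (-(D a + (D a - lie a))) := by rw [hderiv, hD.flip_eq_sub hlie]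
    _ = LinearMap.trace ℝ G (lie a) := by
      simp only [map_neg, map_add, map_sub, hD.trace_eq_zero hlie, zero_add, zero_sub, neg_neg]

end LeviCivita

/-- For every `a ∈ 𝔤`, the divergence of the geodesic vector field
`X_E a = -D a a` at `a`, i.e. the trace of the Fréchet derivative of `X_E` at `a`,
equals `Tr(ad a)`, where `ad a v = [a, v]`. -/
theorem divergence_geodesic_field
    {G : Type*} [NormedAddCommGroup G] [InnerProductSpace ℝ G] [FiniteDimensional ℝ G]
    (lie : G →ₗ[ℝ] G →ₗ[ℝ] G)
    (hanti : ∀ u : G, lie u u = 0)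
    (hjac : ∀ u v w : G, lie u (lie v w) = lie (lie u v) w + lie v (lie u w))
    (D : G →ₗ[ℝ] G →ₗ[ℝ] G)
    (hD : ∀ u v w : G,
      2 * ⟪D u v, w⟫_ℝ = ⟪lie u v, w⟫_ℝ + ⟪lie w u, v⟫_ℝ + ⟪lie w v, u⟫_ℝ) :
    ∀ a : G,
      LinearMap.trace ℝ G (fderiv ℝ (fun x : G => -(D x x)) a).toLinearMap =
        LinearMap.trace ℝ G (lie a) := by
  exact divergence_geodesic_field_general hanti hD
end

section
/- Let α : ℝ × [0,1] → 𝔤 be a smooth map such that for every ε the curve t ↦ α(ε,t) is a geodesic, and let β : ℝ × [0,1] → 𝔤 be a smooth map with Δ(α,β) = 0. Then β₀ = β(0,·) is a Jacobi field along the geodesic α₀ = α(0,·). -/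
open scoped InnerProductSpace

/-- Partial derivative in the second variable `t` of a map `ℝ² → G`. -/
noncomputable def partialT {G : Type*} [NormedAddCommGroup G] [NormedSpace ℝ G]
    (f : ℝ × ℝ → G) (p : ℝ × ℝ) : G :=
  fderiv ℝ f p (0, 1)

/-- Partial derivative in the first variable `ε` of a map `ℝ² → G`. -/
noncomputable def partialE {G : Type*} [NormedAddCommGroup G] [NormedSpace ℝ G]
    (f : ℝ × ℝ → G) (p : ℝ × ℝ) : G :=
  fderiv ℝ f p (1, 0)

/-- The covariant derivative `∇β = β' + D_α β` of a curve `β` along a curve `α`. -/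
noncomputable def covDeriv {G : Type*} [NormedAddCommGroup G] [NormedSpace ℝ G]
    (D : G →ₗ[ℝ] G →ₗ[ℝ] G) (α β : ℝ → G) : ℝ → G :=
  fun t => deriv β t + D (α t) (β t)

/-- The curvature `R(u,v)w = D_u(D_v w) - D_v(D_u w) - D_{[u,v]}w`. -/
def curv {G : Type*} [AddCommGroup G] [Module ℝ G]
    (lie D : G →ₗ[ℝ] G →ₗ[ℝ] G) (u v w : G) : G :=
  D u (D v w) - D v (D u w) - D (lie u v) w

/-!
Put `γ := ∂_ε α + D_β α`. Since `D` is torsion-free, `Δ(α, β) = 0` says exactly that `∇β = γ` along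
each curve `α(ε, ·)`. Differentiating `γ` once more, the mixed partial `∂_t ∂_ε α = ∂_ε ∂_t α` is
given by the linearized geodesic equation, `∂_t β` by `Δ(α, β) = 0` and `∂_t α` by the geodesic
equation; the terms containing `∂_ε α` cancel and what remains of `∇γ` is `R(α, β)α`.
At an endpoint of the `t`-interval `∇β = γ` is known on one side only, but one-sided derivatives
determine the derivatives of the two curves.
-/

lemma differentiable_fderiv_of_contDiff_two {E F : Type*} [NormedAddCommGroup E]
    [NormedSpace ℝ E] [NormedAddCommGroup F] [NormedSpace ℝ F] {f : E → F}
    (hf : ContDiff ℝ 2 f) : Differentiable ℝ (fderiv ℝ f) :=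
  (hf.fderiv_right (m := 1) one_add_one_eq_two.le).differentiable one_ne_zero

section PartialDerivatives

variable {G : Type*} [NormedAddCommGroup G] [NormedSpace ℝ G] {f : ℝ × ℝ → G}

lemma hasDerivAt_partialT {ε t : ℝ} (hf : DifferentiableAt ℝ f (ε, t)) :
    HasDerivAt (fun s => f (ε, s)) (partialT f (ε, t)) t :=
  hf.hasFDerivAt.comp_hasDerivAt t (hasFDerivAt_prodMk_right ε t).hasDerivAt

lemma hasDerivAt_partialE {ε t : ℝ} (hf : DifferentiableAt ℝ f (ε, t)) :
    HasDerivAt (fun s => f (s, t)) (partialE f (ε, t)) ε :=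
  hf.hasFDerivAt.comp_hasDerivAt ε (hasFDerivAt_prodMk_left ε t).hasDerivAt

lemma differentiable_partialT (hf : ContDiff ℝ 2 f) : Differentiable ℝ (partialT f) :=
  (differentiable_fderiv_of_contDiff_two hf).clm_apply (differentiable_const _)

lemma differentiable_partialE (hf : ContDiff ℝ 2 f) : Differentiable ℝ (partialE f) :=
  (differentiable_fderiv_of_contDiff_two hf).clm_apply (differentiable_const _)

lemma partialT_partialE_comm (hf : ContDiff ℝ 2 f) (p : ℝ × ℝ) :
    partialT (partialE f) p = partialE (partialT f) p := by
  have fderiv_fderiv_apply (v w : ℝ × ℝ) :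
      fderiv ℝ (fun q => fderiv ℝ f q v) p w = fderiv ℝ (fderiv ℝ f) p w v := by
    simp [fderiv_clm_apply (differentiable_fderiv_of_contDiff_two hf p)
      (differentiableAt_const v)]
  have symm : IsSymmSndFDerivAt ℝ f p := hf.contDiffAt.isSymmSndFDerivAt (by simp)
  calc partialT (partialE f) p
      = fderiv ℝ (fderiv ℝ f) p (0, 1) (1, 0) := fderiv_fderiv_apply _ _
    _ = fderiv ℝ (fderiv ℝ f) p (1, 0) (0, 1) := symm.eq _ _
    _ = partialE (partialT f) p := (fderiv_fderiv_apply _ _).symm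

end PartialDerivatives

section CovariantDerivative

variable {G : Type*} [NormedAddCommGroup G] [NormedSpace ℝ G]

lemma covDeriv_eq_of_hasDerivAt (D : G →ₗ[ℝ] G →ₗ[ℝ] G) (α : ℝ → G) {β : ℝ → G} {β' : G} {t : ℝ}
    (hβ : HasDerivAt β β' t) : covDeriv D α β t = β' + D (α t) (β t) := by
  rw [covDeriv, hβ.deriv]

lemma covDeriv_congr_of_eqOn (D : G →ₗ[ℝ] G →ₗ[ℝ] G) (α : ℝ → G) {β γ : ℝ → G} {s : Set ℝ} {t : ℝ}
    (hs : UniqueDiffWithinAt ℝ s t) (ht : t ∈ s) (hβ : DifferentiableAt ℝ β t)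
    (hγ : DifferentiableAt ℝ γ t) (h : Set.EqOn β γ s) :
    covDeriv D α β t = covDeriv D α γ t := by
  have deriv_eq : deriv β t = deriv γ t := by
    rw [← hβ.derivWithin hs, ← hγ.derivWithin hs, derivWithin_congr h (h ht)]
  rw [covDeriv, covDeriv, deriv_eq, h ht]

lemma differentiable_covDeriv (D : G →L[ℝ] G →L[ℝ] G) {α β : ℝ → G} (hα : Differentiable ℝ α)
    (hβ : ContDiff ℝ 2 β) : Differentiable ℝ (covDeriv D.toLinearMap₁₂ α β) := by
  have hβ' : Differentiable ℝ (deriv β) := hβ.differentiable_deriv_two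
  have dβ : Differentiable ℝ β := hβ.differentiable two_ne_zero
  exact hβ'.add ((D.differentiable.comp hα).clm_apply dβ)

end CovariantDerivative

lemma sub_flip_eq_lie_of_koszul {G : Type*} [NormedAddCommGroup G] [InnerProductSpace ℝ G]
    {lie D : G →ₗ[ℝ] G →ₗ[ℝ] G} (hanti : lie.IsAlt)
    (hD : ∀ u v w : G,
      2 * ⟪D u v, w⟫_ℝ = ⟪lie u v, w⟫_ℝ + ⟪lie w u, v⟫_ℝ + ⟪lie w v, u⟫_ℝ)
    (u v : G) : D u v - D v u = lie u v := by
  refine ext_inner_right ℝ fun w => ?_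
  have swapped := hD v u w
  rw [← hanti.neg u v, inner_neg_left] at swapped
  rw [inner_sub_left]
  linarith [hD u v w]

section TransverseVariation

variable {G : Type*} [NormedAddCommGroup G] [NormedSpace ℝ G] {α β : ℝ × ℝ → G} {s : Set ℝ}
  {ε t : ℝ}

lemma covDeriv_transverse_eq {lie D : G →ₗ[ℝ] G →ₗ[ℝ] G}
    (htorsion : ∀ u v : G, D u v - D v u = lie u v) (hβ : DifferentiableAt ℝ β (ε, t))
    (hΔ : partialT β (ε, t) - partialE α (ε, t) + lie (α (ε, t)) (β (ε, t)) = 0) :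
    covDeriv D (fun r => α (ε, r)) (fun r => β (ε, r)) t
      = partialE α (ε, t) + D (β (ε, t)) (α (ε, t)) := by
  rw [covDeriv_eq_of_hasDerivAt D _ (hasDerivAt_partialT hβ), ← sub_eq_zero, ← hΔ, ← htorsion]
  abel

lemma partialT_partialE_of_geodesics (D : G →L[ℝ] G →L[ℝ] G) (hα : ContDiff ℝ 2 α)
    (hgeo : ∀ e : ℝ, partialT α (e, t) = -D (α (e, t)) (α (e, t))) :
    partialT (partialE α) (ε, t)
      = -(D (α (ε, t)) (partialE α (ε, t)) + D (partialE α (ε, t)) (α (ε, t))) := by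
  have hα' := hasDerivAt_partialE (hα.differentiable two_ne_zero (ε, t))
  have hDαα := (D.hasDerivAt_of_bilinear (fun _ => hα') (fun _ => hα')).fun_neg
  have h_partialT := hasDerivAt_partialE (differentiable_partialT hα (ε, t))
  rw [partialT_partialE_comm hα]
  simp only [hgeo] at h_partialT
  exact h_partialT.unique hDαα

lemma hasDerivAt_partialE_add (D : G →L[ℝ] G →L[ℝ] G) (hα : ContDiff ℝ 2 α)
    (hβ : DifferentiableAt ℝ β (ε, t)) :
    HasDerivAt (fun r => partialE α (ε, r) + D (β (ε, r)) (α (ε, r)))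
      (partialT (partialE α) (ε, t)
        + (D (β (ε, t)) (partialT α (ε, t)) + D (partialT β (ε, t)) (α (ε, t)))) t :=
  (hasDerivAt_partialT (differentiable_partialE hα (ε, t))).fun_add
    (D.hasDerivAt_of_bilinear (fun _ => hasDerivAt_partialT hβ)
      (fun _ => hasDerivAt_partialT (hα.differentiable two_ne_zero (ε, t))))

lemma covDeriv_partialE_add_eq_curv (lie : G →ₗ[ℝ] G →ₗ[ℝ] G) (D : G →L[ℝ] G →L[ℝ] G)
    (hα : ContDiff ℝ 2 α) (hβ : DifferentiableAt ℝ β (ε, t))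
    (hgeo : ∀ e : ℝ, partialT α (e, t) = -D (α (e, t)) (α (e, t)))
    (hΔ : partialT β (ε, t) - partialE α (ε, t) + lie (α (ε, t)) (β (ε, t)) = 0) :
    covDeriv D.toLinearMap₁₂ (fun r => α (ε, r))
        (fun r => partialE α (ε, r) + D (β (ε, r)) (α (ε, r))) t
      = curv lie D.toLinearMap₁₂ (α (ε, t)) (β (ε, t)) (α (ε, t)) := by
  have h_partialT_β : partialT β (ε, t) = partialE α (ε, t) - lie (α (ε, t)) (β (ε, t)) := by
    rwa [← sub_eq_zero, sub_sub_eq_add_sub, add_sub_right_comm]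
  rw [covDeriv_eq_of_hasDerivAt _ _ (hasDerivAt_partialE_add D hα hβ),
    partialT_partialE_of_geodesics D hα hgeo, hgeo ε, h_partialT_β]
  simp only [curv, ContinuousLinearMap.toLinearMap₁₂_apply_apply_apply, map_add, map_neg, map_sub,
    sub_apply]
  abel

theorem transverse_variation_of_geodesics_is_jacobi_general
    (lie : G →ₗ[ℝ] G →ₗ[ℝ] G) (D : G →L[ℝ] G →L[ℝ] G)
    (htorsion : ∀ u v : G, D u v - D v u = lie u v)
    (hs : UniqueDiffOn ℝ s) (hα : ContDiff ℝ 2 α) (hβ : ContDiff ℝ 2 β)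
    (hgeo : ∀ p : ℝ × ℝ, p.2 ∈ s → partialT α p = -D (α p) (α p))
    (hΔ : ∀ p : ℝ × ℝ, p.2 ∈ s → partialT β p - partialE α p + lie (α p) (β p) = 0)
    (ε : ℝ) :
    ∀ t ∈ s,
      covDeriv D.toLinearMap₁₂ (fun r => α (ε, r))
          (covDeriv D.toLinearMap₁₂ (fun r => α (ε, r)) (fun r => β (ε, r))) t
        = curv lie D.toLinearMap₁₂ (α (ε, t)) (β (ε, t)) (α (ε, t)) := by
  intro t ht
  have dα : Differentiable ℝ α := hα.differentiable two_ne_zero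
  have dβ : Differentiable ℝ β := hβ.differentiable two_ne_zero
  have covDeriv_eqOn : Set.EqOn (covDeriv D.toLinearMap₁₂ (fun r => α (ε, r)) (fun r => β (ε, r)))
      (fun r => partialE α (ε, r) + D (β (ε, r)) (α (ε, r))) s :=
    fun r hr => covDeriv_transverse_eq htorsion (dβ _) (hΔ (ε, r) hr)
  have covDeriv_diff : DifferentiableAt ℝ
      (covDeriv D.toLinearMap₁₂ (fun r => α (ε, r)) (fun r => β (ε, r))) t :=
    differentiable_covDeriv D (dα.comp (by fun_prop)) (hβ.comp (contDiff_prodMk_right ε)) t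
  rw [covDeriv_congr_of_eqOn _ _ (hs t ht) ht covDeriv_diff
    (hasDerivAt_partialE_add D hα (dβ _)).differentiableAt covDeriv_eqOn]
  exact covDeriv_partialE_add_eq_curv lie D hα (dβ _) (fun e => hgeo (e, t) ht) (hΔ (ε, t) ht)

end TransverseVariation

/-- Let `α : ℝ × [0,1] → 𝔤` be a smooth map such that for every `ε` the
curve `t ↦ α(ε,t)` is a geodesic, and let `β : ℝ × [0,1] → 𝔤` be a smooth map with
`Δ(α,β) = 0`.  Then `β₀ = β(0,·)` is a Jacobi field along the geodesic `α₀ = α(0,·)`. -/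
theorem transverse_variation_of_geodesics_is_jacobi
    {G : Type*} [NormedAddCommGroup G] [InnerProductSpace ℝ G] [FiniteDimensional ℝ G]
    (lie : G →ₗ[ℝ] G →ₗ[ℝ] G)
    (hanti : ∀ u : G, lie u u = 0)
    (hjac : ∀ u v w : G, lie u (lie v w) = lie (lie u v) w + lie v (lie u w))
    (D : G →ₗ[ℝ] G →ₗ[ℝ] G)
    (hD : ∀ u v w : G,
      2 * ⟪D u v, w⟫_ℝ = ⟪lie u v, w⟫_ℝ + ⟪lie w u, v⟫_ℝ + ⟪lie w v, u⟫_ℝ)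
    (α β : ℝ × ℝ → G) (hα : ContDiff ℝ (⊤ : ℕ∞) α) (hβ : ContDiff ℝ (⊤ : ℕ∞) β)
    (hgeo : ∀ p : ℝ × ℝ, p.2 ∈ Set.Icc (0 : ℝ) 1 →
      partialT α p = -(D (α p) (α p)))
    (hΔ : ∀ p : ℝ × ℝ, p.2 ∈ Set.Icc (0 : ℝ) 1 →
      partialT β p - partialE α p + lie (α p) (β p) = 0) :
    ∀ t ∈ Set.Icc (0 : ℝ) 1,
      covDeriv D (fun s => α (0, s)) (covDeriv D (fun s => α (0, s)) (fun s => β (0, s))) t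
        = curv lie D (α (0, t)) (β (0, t)) (α (0, t)) :=
  transverse_variation_of_geodesics_is_jacobi_general lie D.toContinuousBilinearMap
    (sub_flip_eq_lie_of_koszul hanti hD) uniqueDiffOn_Icc_zero_one
    (hα.of_le (by norm_cast)) (hβ.of_le (by norm_cast)) hgeo hΔ 0
end
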